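/- Let U(t) ∈ 𝒜 with U′ ≠ 0 and write δ = deg(U). Let 0 ≤ m < n be integers. Then there exist positive constants C₈ depending only on p and U, and C₉ depending only on m, p, and U, such that: d_{m,n,U} ≥ δ·(1 − 1/p + 1/p² − 1/p³)·m·n − C₈·n − C₉. -/

import Mathlib

open Polynomial

/-- `rad A`: the product of the distinct monic irreducible factors of `A`. -/
noncomputable def polyRad {F : Type*} [Field F] (A : Polynomial F) : Polynomial F :=
  ∏ᶠ P ∈ {P : Polynomial F | P.Monic ∧ Irreducible P ∧ P ∣ A}, P

lemma aux_polyRad_natDegree {F : Type*} [Field F] [DecidableEq (AlgebraicClosure F)] (A : F[X]) (hA : A ≠ 0) :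
    ((A.map (algebraMap F (AlgebraicClosure F))).roots.toFinset.card) ≤ (polyRad A).natDegree := by
  classical
  let K := AlgebraicClosure F
  have hfin : {P : F[X] | P.Monic ∧ Irreducible P ∧ P ∣ A}.Finite := by
    have h2 : {P : F[X] | P.Monic ∧ P ∣ A}.Finite := by
      refine Set.Finite.subset (Set.Finite.ofFinset
        ((UniqueFactorizationMonoid.normalizedFactors A).powerset.map Multiset.prod).toFinset
        (fun x => Iff.rfl)) ?_
      rintro P ⟨hm, hd⟩
      simp only [Multiset.mem_toFinset, Multiset.mem_map, Multiset.mem_powerset,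
        SetLike.mem_coe]
      refine ⟨UniqueFactorizationMonoid.normalizedFactors P, ?_, ?_⟩
      · exact (UniqueFactorizationMonoid.dvd_iff_normalizedFactors_le_normalizedFactors
          hm.ne_zero hA).1 hd
      · have := UniqueFactorizationMonoid.prod_normalizedFactors_eq hm.ne_zero
        rw [this, hm.normalize_eq_self]
    exact h2.subset fun P hP => ⟨hP.1, hP.2.2⟩
  have hrad : polyRad A = ∏ P ∈ hfin.toFinset, P := by
    unfold polyRad
    exact finprod_mem_eq_finite_toFinset_prod _ hfin
  have hne : polyRad A ≠ 0 := by
    rw [hrad, Finset.prod_ne_zero_iff]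
    intro P hP
    exact ((Set.Finite.mem_toFinset hfin).1 hP).1.ne_zero
  have hne' : (polyRad A).map (algebraMap F K) ≠ 0 := by
    simpa using hne
  have hsub : (A.map (algebraMap F K)).roots.toFinset ⊆
      ((polyRad A).map (algebraMap F K)).roots.toFinset := by
    intro x hx
    rw [Multiset.mem_toFinset, mem_roots'] at hx
    rw [Multiset.mem_toFinset, mem_roots']
    refine ⟨hne', ?_⟩
    have hx2 : aeval x A = 0 := by
      have := hx.2
      rwa [IsRoot, eval_map_algebraMap] at this
    rw [IsRoot, eval_map_algebraMap]
    have hint : IsIntegral F x := Algebra.IsIntegral.isIntegral x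
    have hd : minpoly F x ∣ polyRad A := by
      rw [hrad]
      apply Finset.dvd_prod_of_mem
      rw [Set.Finite.mem_toFinset]
      exact ⟨minpoly.monic hint, minpoly.irreducible hint, minpoly.dvd F x hx2⟩
    obtain ⟨Q, hQ⟩ := hd
    rw [hQ]; simp
  calc _ ≤ ((polyRad A).map (algebraMap F K)).roots.toFinset.card := Finset.card_le_card hsub
    _ ≤ ((polyRad A).map (algebraMap F K)).roots.card := Multiset.toFinset_card_le _
    _ ≤ ((polyRad A).map (algebraMap F K)).natDegree := card_roots' _
    _ ≤ _ := natDegree_map_le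

lemma aux_fiber {K : Type*} [Field K] [IsAlgClosed K] [DecidableEq K] (V : K[X])
    (hV : derivative V ≠ 0) (c : K) :
    V.natDegree ≤ (V - C c).roots.toFinset.card +
      ∑ x ∈ (V - C c).roots.toFinset, (derivative V).rootMultiplicity x := by
  have h1 : (V - C c).roots.card = V.natDegree := by
    rw [IsAlgClosed.card_roots_eq_natDegree, natDegree_sub_C]
  rw [← h1, ← Multiset.toFinset_sum_count_eq, Finset.card_eq_sum_ones, ← Finset.sum_add_distrib]
  apply Finset.sum_le_sum
  intro x hx
  rw [count_roots]
  have h := rootMultiplicity_sub_one_le_derivative_rootMultiplicity_of_ne_zero (V - C c) x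
    (by simpa using hV)
  simp only [derivative_sub, derivative_C, sub_zero] at h
  omega

lemma aux_total {K : Type*} [Field K] [IsAlgClosed K] [DecidableEq K] (V : K[X])
    (hV : derivative V ≠ 0) (Z : Finset K) (S : Finset K)
    (hS : ∀ x, eval x V ∈ Z → x ∈ S) :
    V.natDegree * Z.card ≤ S.card + V.natDegree := by
  have hmem : ∀ c x, x ∈ (V - C c).roots.toFinset ↔ eval x V = c := by
    intro c x
    have hne : V - C c ≠ 0 := by
      intro h
      apply hV
      rw [sub_eq_zero] at h
      rw [h]; simp
    rw [Multiset.mem_toFinset, mem_roots hne]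
    simp [IsRoot, sub_eq_zero]
  have hdis : (Z : Set K).PairwiseDisjoint (fun c => (V - C c).roots.toFinset) := by
    intro a _ b _ hab
    rw [Function.onFun, Finset.disjoint_left]
    intro x hx hx'
    exact hab (((hmem _ _).1 hx).symm.trans ((hmem _ _).1 hx'))
  have h1 : ∑ c ∈ Z, (V - C c).roots.toFinset.card ≤ S.card := by
    rw [← Finset.card_biUnion hdis]
    apply Finset.card_le_card
    intro x hx
    rw [Finset.mem_biUnion] at hx
    obtain ⟨c, hc, hx⟩ := hx
    apply hS
    rwa [(hmem _ _).1 hx]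
  have h2 : ∑ c ∈ Z, ∑ x ∈ (V - C c).roots.toFinset, (derivative V).rootMultiplicity x
      ≤ V.natDegree := by
    rw [← Finset.sum_biUnion hdis]
    calc _ ≤ (derivative V).roots.card := by
          simp_rw [← count_roots]
          rw [← Multiset.toFinset_sum_count_eq (derivative V).roots]
          apply Finset.sum_le_sum_of_ne_zero
          intro x _ hx
          rw [Multiset.mem_toFinset]
          exact Multiset.count_ne_zero.1 hx
      _ ≤ (derivative V).natDegree := card_roots' _
      _ ≤ V.natDegree - 1 := natDegree_derivative_le _
      _ ≤ _ := Nat.sub_le _ _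
  calc V.natDegree * Z.card = ∑ c ∈ Z, V.natDegree := by simp [mul_comm]
    _ ≤ ∑ c ∈ Z, ((V - C c).roots.toFinset.card +
      ∑ x ∈ (V - C c).roots.toFinset, (derivative V).rootMultiplicity x) :=
        Finset.sum_le_sum fun c _ => aux_fiber V hV c
    _ ≤ _ := by rw [Finset.sum_add_distrib]; omega

lemma aux_inter {K : Type*} [Field K] [DecidableEq K] (a b : ℕ) (h : b < a) (hb : 0 < b) :
    (nthRootsFinset a (1 : K) ∩ nthRootsFinset b (1 : K)).card ≤ a - b := by
  have hs : nthRootsFinset a (1 : K) ∩ nthRootsFinset b (1 : K) ⊆ nthRootsFinset (a - b) (1 : K) := by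
    intro x hx
    rw [Finset.mem_inter, mem_nthRootsFinset (by omega), mem_nthRootsFinset hb] at hx
    rw [mem_nthRootsFinset (by omega)]
    have : x ^ (a - b) * x ^ b = 1 := by rw [← pow_add, Nat.sub_add_cancel h.le, hx.1]
    rwa [hx.2, mul_one] at this
  refine (Finset.card_le_card hs).trans ?_
  rw [nthRootsFinset]
  exact (@Multiset.toFinset_card_le _ (_) _).trans (card_nthRoots _ _)

lemma aux_union {K : Type*} [Field K] [DecidableEq K] (m n : ℕ) (h : m < n) (k : ℕ)
    (hk : k ≤ m + 1) :
    ∑ i ∈ Finset.range k, (nthRootsFinset (n - i) (1 : K)).card ≤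
      ((Finset.range k).biUnion fun i => nthRootsFinset (n - i) (1 : K)).card + k * (k * m) := by
  induction k with
  | zero => simp
  | succ k ih =>
    have ih := ih (by omega)
    rw [Finset.sum_range_succ, Finset.range_add_one, Finset.biUnion_insert]
    have h1 := Finset.card_union_add_card_inter (nthRootsFinset (n - k) (1 : K))
      ((Finset.range k).biUnion fun i => nthRootsFinset (n - i) (1 : K))
    have h2 : (nthRootsFinset (n - k) (1 : K) ∩
      ((Finset.range k).biUnion fun i => nthRootsFinset (n - i) (1 : K))).card ≤ k * m := by
      rw [Finset.inter_biUnion]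
      refine Finset.card_biUnion_le.trans ?_
      calc _ ≤ ∑ i ∈ Finset.range k, m := by
            apply Finset.sum_le_sum
            intro i hi
            rw [Finset.mem_range] at hi
            rw [Finset.inter_comm]
            exact (aux_inter (n - i) (n - k) (by omega) (by omega)).trans (by omega)
        _ = _ := by simp
    nlinarith [Nat.zero_le (k * m), Nat.zero_le m]

lemma aux_card {K : Type*} [Field K] [IsAlgClosed K] (p : ℕ) [Fact p.Prime] [CharP K p]
    (k : ℕ) (hk : ¬ p ∣ k) : (nthRootsFinset k (1 : K)).card = k := by
  have : NeZero (k : K) := ⟨by rwa [Ne, CharP.cast_eq_zero_iff K p]⟩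
  obtain ⟨z, hz⟩ := HasEnoughRootsOfUnity.exists_primitiveRoot K k
  exact hz.card_nthRootsFinset

lemma aux_card_ge {K : Type*} [Field K] [IsAlgClosed K] (p : ℕ) [Fact p.Prime] [CharP K p]
    (k : ℕ) (hk : 0 < k) :
    (k : ℝ) * (1 - (if p ∣ k then (1 : ℝ) else 0) * (1 - 1 / p)
      - (if p ^ 2 ∣ k then (1 : ℝ) else 0) * (1 / p)) ≤ (nthRootsFinset k (1 : K)).card := by
  have hp : 0 < p := (Fact.out : p.Prime).pos
  by_cases h1 : p ∣ k
  · by_cases h2 : p ^ 2 ∣ k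
    · simp [h1, h2]
    · simp only [h1, h2, if_true, if_false]
      obtain ⟨l, rfl⟩ := h1
      have hl : ¬ p ∣ l := fun h => h2 (by rw [pow_two]; exact Nat.mul_dvd_mul_left p h)
      have hl0 : 0 < l := Nat.pos_of_mul_pos_left hk
      have hs : nthRootsFinset l (1 : K) ⊆ nthRootsFinset (p * l) (1 : K) := by
        intro x hx
        rw [mem_nthRootsFinset hl0] at hx
        rw [mem_nthRootsFinset hk, mul_comm, pow_mul, hx, one_pow]
      have := Finset.card_le_card hs
      rw [aux_card p l hl] at this
      have h3 : (l : ℝ) ≤ (nthRootsFinset (p * l) (1 : K)).card := by exact_mod_cast this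
      refine le_trans (le_of_eq ?_) h3
      have : (p : ℝ) ≠ 0 := by positivity
      push_cast
      field_simp
      ring
  · have h2 : ¬ p ^ 2 ∣ k := fun h => h1 ((dvd_pow_self p two_ne_zero).trans h)
    rw [aux_card p k h1]
    simp [h1, h2]

lemma aux_count (d n M : ℕ) (hd : 0 < d) (hM : M ≤ n) :
    ∑ i ∈ Finset.range M, (if d ∣ n - i then (1 : ℝ) else 0) ≤ M / d + 1 := by
  rw [Finset.sum_boole]
  have h : (Finset.range M).filter (fun i => d ∣ n - i) =
      (Finset.range M).filter (fun i => i ≡ n [MOD d]) := by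
    apply Finset.filter_congr
    intro i hi
    rw [Finset.mem_range] at hi
    exact (Nat.modEq_iff_dvd' (by omega)).symm
  rw [h, ← Nat.count_eq_card_filter_range, Nat.count_modEq_card _ hd]
  have h1 : ((M / d : ℕ) : ℝ) ≤ (M : ℝ) / d := Nat.cast_div_le
  push_cast
  split_ifs <;> norm_num <;> linarith

/-- Let `𝔽` be a finite field of characteristic `p`, and `U ∈ 𝒜 = 𝔽[t]` with `U' ≠ 0` and
`δ = deg U`. There is a constant `C₈ > 0` depending only on `p` and `U`, and for each `m` a
constant `C₉ > 0` depending only on `m, p, U`, such that for all integers `0 ≤ m < n`,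
`d_{m,n,U} ≥ δ (1 - 1/p + 1/p² - 1/p³) m n - C₈ n - C₉`, where `d_{m,n,U}` is the degree of
the radical of `Δ_{m,n,U} = (Uⁿ - 1)(U^{n-1} - 1) ⋯ (U^{n-m} - 1)`. -/
theorem radical_degree_lower_bound_partial {F : Type*} [Field F] [Fintype F]
    (p : ℕ) [Fact p.Prime] [CharP F p]
    (U : F[X]) (hU : Polynomial.derivative U ≠ 0) :
    ∃ C₈ : ℝ, 0 < C₈ ∧ ∀ m : ℕ, ∃ C₉ : ℝ, 0 < C₉ ∧ ∀ n : ℕ, m < n →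
      (U.natDegree : ℝ) * (1 - 1 / (p : ℝ) + 1 / (p : ℝ) ^ 2 - 1 / (p : ℝ) ^ 3) *
          (m : ℝ) * (n : ℝ) - C₈ * (n : ℝ) - C₉ ≤
        ((polyRad (∏ i ∈ Finset.range (m + 1), (U ^ (n - i) - 1))).natDegree : ℝ) := by
  classical
  let K := AlgebraicClosure F
  have : CharP K p := charP_of_injective_algebraMap (algebraMap F K).injective p
  have hp2 : 2 ≤ p := (Fact.out : p.Prime).two_le
  have hδ : 0 < U.natDegree := by
    by_contra h
    apply hU
    rw [eq_C_of_natDegree_eq_zero (by omega : U.natDegree = 0)]; simp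
  have hδ' : (0 : ℝ) < U.natDegree := by exact_mod_cast hδ
  refine ⟨2 * U.natDegree, by positivity, fun m => ?_⟩
  refine ⟨U.natDegree * (m * (m + 1) + (m + 1) * ((m + 1) * m) + 1), by positivity, fun n hn => ?_⟩
  set A : F[X] := ∏ i ∈ Finset.range (m + 1), (U ^ (n - i) - 1) with hAdef
  have hA : A ≠ 0 := by
    rw [hAdef, Finset.prod_ne_zero_iff]
    intro i hi h
    rw [Finset.mem_range] at hi
    rw [sub_eq_zero] at h
    have := congrArg natDegree h
    rw [natDegree_pow, natDegree_one] at this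
    have : 0 < (n - i) * U.natDegree := Nat.mul_pos (by omega) hδ
    omega
  have hrad := aux_polyRad_natDegree A hA
  set Z : Finset K := (Finset.range (m + 1)).biUnion fun i => nthRootsFinset (n - i) (1 : K) with hZ
  set V : K[X] := U.map (algebraMap F K) with hVdef
  have hV : derivative V ≠ 0 := by
    rw [hVdef, derivative_map]
    simpa using hU
  have hVd : V.natDegree = U.natDegree := natDegree_map _
  have htot := aux_total V hV Z (A.map (algebraMap F K)).roots.toFinset (by
    intro x hx
    rw [hZ, Finset.mem_biUnion] at hx
    obtain ⟨i, hi, hx⟩ := hx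
    have hi' := Finset.mem_range.1 hi
    rw [mem_nthRootsFinset (by omega)] at hx
    rw [Multiset.mem_toFinset, mem_roots']
    refine ⟨by simpa using hA, ?_⟩
    rw [IsRoot, hAdef, Polynomial.map_prod, eval_prod]
    apply Finset.prod_eq_zero hi
    simp [← hVdef, hx])
  rw [hVd] at htot
  have huni := aux_union (K := K) m n hn (m + 1) le_rfl
  rw [← hZ] at huni
  have e1 : (U.natDegree : ℝ) * Z.card ≤ (polyRad A).natDegree + U.natDegree := by
    exact_mod_cast htot.trans (Nat.add_le_add_right hrad _)
  have e2 : ∑ i ∈ Finset.range (m + 1), ((nthRootsFinset (n - i) (1 : K)).card : ℝ) ≤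
      Z.card + (m + 1) * ((m + 1) * m) := by exact_mod_cast huni
  have hq : (0 : ℝ) < 1 / p ∧ (1 : ℝ) / p ≤ 1 / 2 := by
    have : (2 : ℝ) ≤ p := by exact_mod_cast hp2
    exact ⟨by positivity, one_div_le_one_div_of_le (by norm_num) this⟩
  have c1 := aux_count p n (m + 1) (by omega) hn
  have c2 := aux_count (p ^ 2) n (m + 1) (by positivity) hn
  set s1 := ∑ i ∈ Finset.range (m + 1), (if p ∣ n - i then (1 : ℝ) else 0) with hs1
  set s2 := ∑ i ∈ Finset.range (m + 1), (if p ^ 2 ∣ n - i then (1 : ℝ) else 0) with hs2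
  set r : ℝ := 1 / p with hr
  have c1' : s1 ≤ (m + 1) * r + 1 := by
    refine c1.trans (le_of_eq ?_); push_cast; rw [hr]; ring
  have c2' : s2 ≤ (m + 1) * r ^ 2 + 1 := by
    refine c2.trans (le_of_eq ?_); push_cast; rw [hr]; ring
  have e3 : ((n : ℝ) - m) * ((m + 1) - s1 * (1 - r) - s2 * r) ≤
      ∑ i ∈ Finset.range (m + 1), ((nthRootsFinset (n - i) (1 : K)).card : ℝ) := by
    have : ((n : ℝ) - m) * ((m + 1) - s1 * (1 - r) - s2 * r) =
      ∑ i ∈ Finset.range (m + 1), ((n : ℝ) - m) * (1 - (if p ∣ n - i then (1 : ℝ) else 0) * (1 - r)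
      - (if p ^ 2 ∣ n - i then (1 : ℝ) else 0) * r) := by
      rw [← Finset.mul_sum, Finset.sum_sub_distrib, Finset.sum_sub_distrib, ← Finset.sum_mul,
        ← Finset.sum_mul, ← hs1, ← hs2]
      simp
    rw [this]
    apply Finset.sum_le_sum
    intro i hi
    have hi' := Finset.mem_range.1 hi
    refine le_trans ?_ (aux_card_ge (K := K) p (n - i) (by omega))
    apply mul_le_mul_of_nonneg_right
    · rw [Nat.cast_sub (by omega)]
      have : (i : ℝ) ≤ m := by exact_mod_cast (by omega : i ≤ m)
      linarith
    · clear this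
      split_ifs <;> nlinarith [hq.1, hq.2]
  have hnm : (0 : ℝ) ≤ (n : ℝ) - m := by
    have : (m : ℝ) ≤ n := by exact_mod_cast hn.le
    linarith
  have hm0 : (0 : ℝ) ≤ m := Nat.cast_nonneg m
  have hn0 : (0 : ℝ) ≤ n := Nat.cast_nonneg n
  set α : ℝ := 1 - r + r ^ 2 - r ^ 3 with hα
  have hα0 : 0 ≤ α := by
    have : α = (1 - r) * (1 + r ^ 2) := by rw [hα]; ring
    rw [this]; exact mul_nonneg (by linarith [hq.2]) (by positivity)
  have hα1 : α ≤ 1 := by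
    have : α = 1 - r * ((1 - r) + r ^ 2) := by rw [hα]; ring
    rw [this]
    have : 0 ≤ r * ((1 - r) + r ^ 2) := mul_nonneg hq.1.le (by nlinarith [hq.2, sq_nonneg r])
    linarith
  have e4 : (m + 1) * α - 2 ≤ (m + 1) - s1 * (1 - r) - s2 * r := by
    have a1 := mul_le_mul_of_nonneg_right c1' (by linarith [hq.2] : 0 ≤ 1 - r)
    have a2 := mul_le_mul_of_nonneg_right c2' hq.1.le
    rw [hα]
    nlinarith [hq.1, hq.2]
  have e5 := mul_le_mul_of_nonneg_left e4 hnm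
  have e6 : m * n * α - 2 * n - m * (m + 1) ≤ ((n : ℝ) - m) * ((m + 1) * α - 2) := by
    have : 0 ≤ m * (m + 1) * (1 - α) := mul_nonneg (by positivity) (by linarith)
    nlinarith [mul_nonneg hn0 hα0]
  have e7 : m * n * α - 2 * n - m * (m + 1) - (m + 1) * ((m + 1) * m) ≤ (Z.card : ℝ) := by linarith
  have e8 := mul_le_mul_of_nonneg_left e7 hδ'.le
  have hαe : 1 - 1 / (p : ℝ) + 1 / (p : ℝ) ^ 2 - 1 / (p : ℝ) ^ 3 = α := by
    rw [hα, hr]; ring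
  have hαe' : 1 - r + 1 / (p : ℝ) ^ 2 - 1 / (p : ℝ) ^ 3 = α := hαe
  first
    | rw [hαe']
    | rw [hαe]
  linarith
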